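/- Let p be a prime number, let α_0 ∈ [0,1), and let b : ℕ → {0,1,…,p−1}. Define α_n = (α_0 + Σ_{j=0}^{n−1} b_j·p^j)/p^n for n ∈ ℕ, and let x = Σ_{j=0}^∞ b_j·p^j ∈ ℤ_p (the series converging in ℚ_p). Then for all j1, j4 ∈ ℤ and all k1, k4 ∈ ℕ: exp(2πi·α_0·j1·j4/p^{k1+k4}) · exp(2πi·{x·j1·j4/p^{k1+k4}}_p) = exp(2πi·α_{k1+k4}·j1·j4). -/

import Mathlib

/-!
The partial sum `S = ∑ j < n, b j * p ^ j` is an integer with `x - S ∈ p ^ n ℤ_p`. Hence, for every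
integer `j`, the rational `S * j / p ^ n ∈ ℤ[1/p]` differs from `x * j / p ^ n` by an element of
`ℤ_p`, so it agrees with the fractional part of `x * j / p ^ n` up to `ℤ[1/p] ∩ ℤ_p = ℤ`, which
`t ↦ exp (2πit)` does not see. Adding `α0 * j / p ^ n` to `S * j / p ^ n` gives `α n * j`.
-/

open scoped Real

/-- The additive subgroup `ℤ[1/p]` of `ℚ` of `p`-adic rationals. -/
def pAdicRat (p : ℕ) : AddSubgroup ℚ where
  carrier := {r : ℚ | ∃ (z : ℤ) (k : ℕ), r * (p : ℚ) ^ k = z}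
  zero_mem' := ⟨0, 0, by simp⟩
  add_mem' := by
    rintro a b ⟨z1, k1, h1⟩ ⟨z2, k2, h2⟩
    refine ⟨z1 * (p : ℤ) ^ k2 + z2 * (p : ℤ) ^ k1, k1 + k2, ?_⟩
    push_cast
    calc (a + b) * (p : ℚ) ^ (k1 + k2)
        = (a * (p : ℚ) ^ k1) * (p : ℚ) ^ k2 + (b * (p : ℚ) ^ k2) * (p : ℚ) ^ k1 := by
          rw [pow_add]; ring
      _ = (z1 : ℚ) * (p : ℚ) ^ k2 + (z2 : ℚ) * (p : ℚ) ^ k1 := by rw [h1, h2]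
  neg_mem' := by
    rintro a ⟨z, k, h⟩
    exact ⟨-z, k, by push_cast; rw [neg_mul, h]⟩

theorem norm_mul_pow_le_pow_norm {R : Type*} [SeminormedRing R] [NormOneClass R] {a : R}
    (ha : ‖a‖ ≤ 1) (q : R) (n : ℕ) : ‖a * q ^ n‖ ≤ ‖q‖ ^ n :=
  (norm_mul_le _ _).trans <| (mul_le_of_le_one_left (norm_nonneg _) ha).trans (norm_pow_le q n)

section Series

variable {R : Type*} [NormedRing R] [NormOneClass R] [CompleteSpace R]

theorem summable_mul_pow_of_norm_le_one {q : R} (hq : ‖q‖ < 1) {a : ℕ → R}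
    (ha : ∀ i, ‖a i‖ ≤ 1) : Summable fun i ↦ a i * q ^ i :=
  (summable_geometric_of_lt_one (norm_nonneg q) hq).of_norm_bounded
    fun i ↦ norm_mul_pow_le_pow_norm (ha i) q i

theorem norm_tsum_sub_sum_range_mul_pow_le [IsUltrametricDist R] {q : R}
    (hq : ‖q‖ < 1) {a : ℕ → R} (ha : ∀ i, ‖a i‖ ≤ 1) (n : ℕ) :
    ‖∑' i, a i * q ^ i - ∑ i ∈ Finset.range n, a i * q ^ i‖ ≤ ‖q‖ ^ n := by
  rw [← (summable_mul_pow_of_norm_le_one hq ha).sum_add_tsum_nat_add n, add_sub_cancel_left]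
  refine IsUltrametricDist.norm_tsum_le_of_forall_le fun i ↦ ?_
  calc ‖a (i + n) * q ^ (i + n)‖ ≤ ‖q‖ ^ (i + n) := norm_mul_pow_le_pow_norm (ha _) q _
    _ ≤ ‖q‖ ^ n := pow_le_pow_of_le_one (norm_nonneg q) hq.le (Nat.le_add_left n i)

end Series

theorem norm_mul_div_sub_mul_div_le_one {K : Type*} [NormedDivisionRing K] {x y c d : K}
    (hc : ‖c‖ ≤ 1) (hxy : ‖x - y‖ ≤ ‖d‖) : ‖x * c / d - y * c / d‖ ≤ 1 := by
  rw [← sub_div, ← sub_mul, norm_div, norm_mul]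
  exact div_le_one_of_le₀ ((mul_le_of_le_one_right (norm_nonneg _) hc).trans hxy) (norm_nonneg d)

theorem intCast_div_pow_mem_pAdicRat {p : ℕ} (hp : p ≠ 0) (z : ℤ) (n : ℕ) :
    (z : ℚ) / (p : ℚ) ^ n ∈ pAdicRat p :=
  ⟨z, n, div_mul_cancel₀ _ (pow_ne_zero n (Nat.cast_ne_zero.mpr hp))⟩

section Padic

variable {p : ℕ} [Fact p.Prime]

theorem exists_eq_intCast_of_mem_pAdicRat_of_norm_le_one {r : ℚ} (hr : r ∈ pAdicRat p)
    (hnorm : ‖(r : ℚ_[p])‖ ≤ 1) : ∃ m : ℤ, r = m := by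
  obtain ⟨z, k, hz⟩ := hr
  have hzp : (z : ℚ_[p]) = (r : ℚ_[p]) * (p : ℚ_[p]) ^ k := mod_cast hz.symm
  have hdvd : (p : ℤ) ^ k ∣ z := by
    rw [← Padic.norm_int_le_pow_iff_dvd, ← Padic.norm_p_pow, hzp, norm_pow]
    exact norm_mul_pow_le_pow_norm hnorm _ k
  obtain ⟨m, rfl⟩ := hdvd
  have hp : (p : ℚ) ≠ 0 := Nat.cast_ne_zero.mpr (NeZero.ne p)
  exact ⟨m, mul_right_cancel₀ (pow_ne_zero k hp) <| by rw [hz]; push_cast; ring⟩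

theorem circleExp_two_pi_mul_eq_of_norm_sub_le_one {y : ℚ_[p]} {r s : ℚ} (hr : r ∈ pAdicRat p)
    (hs : s ∈ pAdicRat p) (hyr : ‖y - r‖ ≤ 1) (hys : ‖y - s‖ ≤ 1) :
    Circle.exp (2 * π * r) = Circle.exp (2 * π * s) := by
  have hrs : ‖((r - s : ℚ) : ℚ_[p])‖ ≤ 1 := by
    rw [Rat.cast_sub, ← dist_eq_norm]
    refine (dist_triangle_max (r : ℚ_[p]) y s).trans (max_le ?_ ?_)
    · rwa [dist_comm, dist_eq_norm]
    · rwa [dist_eq_norm]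
  obtain ⟨m, hm⟩ :=
    exists_eq_intCast_of_mem_pAdicRat_of_norm_le_one ((pAdicRat p).sub_mem hr hs) hrs
  have hr_eq : (r : ℝ) = s + m := mod_cast sub_eq_iff_eq_add'.mp hm
  rw [hr_eq, mul_add, Circle.exp_add, Circle.exp_two_pi_mul_int, mul_one]

theorem circleExp_mul_circleExp_eq_of_norm_sub_intCast_le {x : ℚ_[p]} {s j : ℤ} {n : ℕ} {r : ℚ}
    (hr : r ∈ pAdicRat p) (hxr : ‖x * j / (p : ℚ_[p]) ^ n - r‖ ≤ 1)
    (hxs : ‖x - s‖ ≤ ‖(p : ℚ_[p])‖ ^ n) (t : ℝ) :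
    Circle.exp (2 * π * (t * j / (p : ℝ) ^ n)) * Circle.exp (2 * π * r) =
      Circle.exp (2 * π * ((t + s) / (p : ℝ) ^ n * j)) := by
  have hmem := intCast_div_pow_mem_pAdicRat (NeZero.ne p) (s * j) n
  have hnorm : ‖x * j / (p : ℚ_[p]) ^ n - (((s * j : ℤ) / (p : ℚ) ^ n : ℚ) : ℚ_[p])‖ ≤ 1 := by
    push_cast
    exact norm_mul_div_sub_mul_div_le_one (Padic.norm_int_le_one j) (by rwa [norm_pow])
  rw [circleExp_two_pi_mul_eq_of_norm_sub_le_one hr hmem hxr hnorm, ← Circle.exp_add]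
  congr 1
  push_cast
  ring

end Padic

theorem cocycle_matching_general (p : ℕ) [Fact p.Prime]
    (frac : ℚ_[p] → ℚ)
    (hfrac : ∀ y : ℚ_[p], frac y ∈ pAdicRat p ∧ ‖y - (frac y : ℚ_[p])‖ ≤ 1)
    (α0 : ℝ) (b : ℕ → ℤ) (α : ℕ → ℝ)
    (hα : ∀ n : ℕ, α n = (α0 + ∑ i ∈ Finset.range n, (b i : ℝ) * (p : ℝ) ^ i) / (p : ℝ) ^ n)
    (x : ℚ_[p]) (hx : x = ∑' i : ℕ, (b i : ℚ_[p]) * (p : ℚ_[p]) ^ i) (j : ℤ) (n : ℕ) :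
    Circle.exp (2 * π * (α0 * j / (p : ℝ) ^ n)) *
        Circle.exp (2 * π * (frac (x * j / (p : ℚ_[p]) ^ n) : ℝ)) =
      Circle.exp (2 * π * (α n * j)) := by
  have hxs : ‖x - (∑ i ∈ Finset.range n, b i * (p : ℤ) ^ i : ℤ)‖ ≤ ‖(p : ℚ_[p])‖ ^ n := by
    push_cast
    rw [hx]
    exact norm_tsum_sub_sum_range_mul_pow_le Padic.norm_p_lt_one
      (fun i ↦ Padic.norm_int_le_one (b i)) n
  obtain ⟨hmem, hnorm⟩ := hfrac (x * j / (p : ℚ_[p]) ^ n)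
  rw [circleExp_mul_circleExp_eq_of_norm_sub_intCast_le hmem hnorm hxs α0, hα]
  push_cast
  rfl

/-- Let `p` be prime, `α_0 ∈ [0,1)`, `b : ℕ → {0,…,p-1}`, set
`α_n = (α_0 + Σ_{j<n} b_j p^j)/p^n` and `x = Σ_j b_j p^j ∈ ℤ_p ⊆ ℚ_p`. Then for all
`j1, j4 ∈ ℤ` and `k1, k4 ∈ ℕ`,
`exp(2πi α_0 j1 j4 / p^{k1+k4}) exp(2πi {x j1 j4 / p^{k1+k4}}_p) = exp(2πi α_{k1+k4} j1 j4)`. -/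
theorem cocycle_matching (p : ℕ) [Fact p.Prime]
    (frac : ℚ_[p] → ℚ)
    (hfrac : ∀ y : ℚ_[p], frac y ∈ pAdicRat p ∧ 0 ≤ frac y ∧ frac y < 1 ∧
      ‖y - ((frac y : ℚ) : ℚ_[p])‖ ≤ 1)
    (α0 : ℝ) (hα0 : 0 ≤ α0 ∧ α0 < 1)
    (b : ℕ → ℕ) (hb : ∀ j, b j < p)
    (α : ℕ → ℝ)
    (hα : ∀ n : ℕ, α n = (α0 + ∑ j ∈ Finset.range n, (b j : ℝ) * (p : ℝ) ^ j) / (p : ℝ) ^ n)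
    (x : ℚ_[p]) (hx : x = ∑' j : ℕ, (b j : ℚ_[p]) * (p : ℚ_[p]) ^ j) :
    ∀ (j1 j4 : ℤ) (k1 k4 : ℕ),
      Circle.exp (2 * π * (α0 * (j1 : ℝ) * (j4 : ℝ) / (p : ℝ) ^ (k1 + k4))) *
        Circle.exp (2 * π *
          ((frac (x * ((j1 : ℚ_[p]) * (j4 : ℚ_[p])) / (p : ℚ_[p]) ^ (k1 + k4)) : ℚ) : ℝ)) =
      Circle.exp (2 * π * (α (k1 + k4) * (j1 : ℝ) * (j4 : ℝ))) := by
  intro j1 j4 k1 k4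
  simpa [mul_assoc] using cocycle_matching_general p frac (fun y ↦ ⟨(hfrac y).1, (hfrac y).2.2.2⟩)
    α0 (fun i ↦ b i) α (by simpa using hα) x (by simpa using hx) (j1 * j4) (k1 + k4)
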